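/- For every hypergraph L ∈ 𝓛₂₉ there exists a fractional hom(M)-tiling h of L with h_min ≥ 1/3 and w(h) ≥ 16 + 1/3. -/

import Mathlib

open Finset

/-- The vertex set of a hypergraph in the family `𝓛₂₉`: two disjoint copies of the
vertex set of `M` (each a copy of `Fin 8`) together with two extra vertices `u, v`. -/
abbrev L29V : Type := (Fin 8 ⊕ Fin 8) ⊕ Fin 2

/-- The `i`-th vertex of the first copy `M₁` of `M`. -/
def m1 (i : Fin 8) : L29V := Sum.inl (Sum.inl i)

/-- The `i`-th vertex of the second copy `M₂` of `M`. -/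
def m2 (i : Fin 8) : L29V := Sum.inl (Sum.inr i)

/-- The two extra vertices `u` (for `i = 0`) and `v` (for `i = 1`). -/
def uv (i : Fin 2) : L29V := Sum.inr i

/-- The four edges of a copy of `M` (vertices `{1,…,8}`, edges `{1,2,3}`, `{3,4,5}`,
`{4,5,6}`, `{6,7,8}`) with vertex embedding `c`. -/
def MEdgesOf (c : Fin 8 → L29V) : Finset (Finset L29V) :=
  {({c 0, c 1, c 2} : Finset L29V), {c 2, c 3, c 4}, {c 3, c 4, c 5}, {c 5, c 6, c 7}}

/-- `E` is the edge set of a member of the family `𝓛₂₉`: it consists of the two copies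
`M₁`, `M₂` of `M` together with edges through `u` or `v`, each containing exactly one
vertex of `M₁` and one vertex of `M₂`; moreover `{u,a,b} ∈ E ↔ {v,a,b} ∈ E` and
`deg u = deg v ≥ 29`. -/
def IsL29 (E : Finset (Finset L29V)) : Prop :=
  (∀ e ∈ MEdgesOf m1, e ∈ E) ∧
  (∀ e ∈ MEdgesOf m2, e ∈ E) ∧
  (∀ e ∈ E, e ∈ MEdgesOf m1 ∨ e ∈ MEdgesOf m2 ∨
    ∃ (w : Fin 2) (a b : Fin 8), e = {uv w, m1 a, m2 b}) ∧
  (∀ a b : Fin 8, ({uv 0, m1 a, m2 b} : Finset L29V) ∈ E ↔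
    ({uv 1, m1 a, m2 b} : Finset L29V) ∈ E) ∧
  (E.filter (fun e => uv 0 ∈ e)).card = (E.filter (fun e => uv 1 ∈ e)).card ∧
  29 ≤ (E.filter (fun e => uv 0 ∈ e)).card

/-- `h` is a fractional `hom(M)`-tiling of the hypergraph with edge predicate `E`. -/
def IsFracHomTiling {α : Type} [Fintype α] [DecidableEq α]
    (E : Finset α → Prop) (h : α → Finset α → ℝ) : Prop :=
  (∀ v e, 0 ≤ h v e ∧ h v e ≤ 1) ∧
  (∀ v e, h v e ≠ 0 → E e ∧ v ∈ e) ∧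
  (∀ v : α, ∑ e : Finset α, h v e ≤ 1) ∧
  (∀ e : Finset α, E e →
    ∃ u v w : α, e = {u, v, w} ∧ u ≠ v ∧ u ≠ w ∧ v ≠ w ∧
      h u e = h v e ∧ h w e ≤ h v e ∧ 2 / 3 * h u e ≤ h w e)

/-- The weight `w(h)` of a fractional `hom(M)`-tiling. -/
def tilingWeight {α : Type} [Fintype α] [DecidableEq α] (h : α → Finset α → ℝ) : ℝ :=
  ∑ v : α, ∑ e : Finset α, h v e

/-! Each copy of `M` has a fractional tiling that saturates all of its eight vertices, so `1 / 3`
has to be gained from edges through `u`. View the pairs `(a, b)` that form an edge with `u` as cells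
of an `8 × 8` board. Two such edges with weights `3, 3, 2` (in units of `1 / 6`) on `u`, `a`, `b`
gain `6` at `u`. Two vertices of `M` are twins if interchanging them is an automorphism of `M`;
there are three pairs of twins and two vertices without a twin. If the two vertices `a` are twins,
the first copy can make room for them without any loss; the second copy can make room for the two
vertices `b` with a loss of at most `4`, unless neither has a twin. The cells with a coordinate that
has no twin form a cross of `28` cells, and the board retracts onto it in such a way that any two
cells with the same image are a pair as above, possibly after interchanging the two copies. So `29`
cells suffice by the pigeonhole principle. -/

/-- A triple of vertices with the weights that a tiling gives them, in units of `1 / 6`: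
`fst` and `snd` receive `hi`, and `low` receives `lo`. -/
structure WeightedTriple (α : Type*) where
  (fst snd low : α)
  (hi lo : ℕ)

namespace WeightedTriple

section Basic

variable {α β : Type*} {t : WeightedTriple α}

/-- The weighted triple transported along a map of vertices. -/
def map (c : α → β) (t : WeightedTriple α) : WeightedTriple β :=
  ⟨c t.fst, c t.snd, c t.low, t.hi, t.lo⟩

/-- The weights `(hi, lo)` may appear on an edge of a fractional `hom(M)`-tiling whose non-zero
values are at least `1 / 3`. -/
def Admissible (hi lo : ℕ) : Prop := lo ≤ hi ∧ 2 * hi ≤ 3 * lo ∧ (lo = 0 ∨ 2 ≤ lo)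

instance : DecidableRel Admissible := fun _ _ => inferInstanceAs (Decidable (_ ∧ _ ∧ _))

/-- A weighted triple with three distinct vertices and admissible weights. -/
structure IsValid (t : WeightedTriple α) : Prop where
  fst_ne_snd : t.fst ≠ t.snd
  fst_ne_low : t.fst ≠ t.low
  snd_ne_low : t.snd ≠ t.low
  admissible : Admissible t.hi t.lo

lemma IsValid.map {c : α → β} (hc : c.Injective) (ht : t.IsValid) : (t.map c).IsValid :=
  ⟨hc.ne ht.fst_ne_snd, hc.ne ht.fst_ne_low, hc.ne ht.snd_ne_low, ht.admissible⟩

variable [DecidableEq α]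

/-- The hyperedge underlying a weighted triple. -/
def edge (t : WeightedTriple α) : Finset α := {t.fst, t.snd, t.low}

/-- The weight that a weighted triple puts on each vertex, in units of `1 / 6`. -/
def weight (t : WeightedTriple α) : α → ℕ :=
  Pi.single t.fst t.hi + Pi.single t.snd t.hi + Pi.single t.low t.lo

lemma weight_apply (t : WeightedTriple α) (v : α) :
    t.weight v = (if v = t.fst then t.hi else 0) + (if v = t.snd then t.hi else 0) +
      (if v = t.low then t.lo else 0) := by
  simp only [weight, Pi.add_apply, Pi.single_apply]

lemma sum_weight [Fintype α] (t : WeightedTriple α) : ∑ v, t.weight v = 2 * t.hi + t.lo := by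
  simp [weight_apply, sum_add_distrib, two_mul]

lemma weight_eq_zero_of_notMem {v : α} (hv : v ∉ t.edge) : t.weight v = 0 := by
  simp only [edge, mem_insert, mem_singleton, not_or] at hv
  simp [weight_apply, hv]

lemma edge_map [DecidableEq β] (c : β → α) (t : WeightedTriple β) :
    (t.map c).edge = t.edge.image c := by
  simp [edge, map, image_insert]

lemma weight_map_apply [DecidableEq β] {c : β → α} (hc : c.Injective) (t : WeightedTriple β)
    (v : β) : (t.map c).weight (c v) = t.weight v := by
  simp [weight_apply, map, hc.eq_iff]

lemma weight_map_eq_zero {c : β → α} {v : α} (hv : ∀ i, c i ≠ v) (t : WeightedTriple β) :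
    (t.map c).weight v = 0 := by
  simp [weight_apply, map, fun i => (hv i).symm]

lemma IsValid.weight_fst (ht : t.IsValid) : t.weight t.fst = t.hi := by
  simp [weight_apply, ht.fst_ne_snd, ht.fst_ne_low]

lemma IsValid.weight_snd (ht : t.IsValid) : t.weight t.snd = t.hi := by
  simp [weight_apply, ht.fst_ne_snd.symm, ht.snd_ne_low]

lemma IsValid.weight_low (ht : t.IsValid) : t.weight t.low = t.lo := by
  simp [weight_apply, ht.fst_ne_low.symm, ht.snd_ne_low.symm]

lemma IsValid.weight_eq_zero_or_two_le (ht : t.IsValid) (v : α) :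
    t.weight v = 0 ∨ 2 ≤ t.weight v := by
  obtain ⟨hle, hratio, hlo⟩ := ht.admissible
  rw [weight_apply]
  split_ifs <;> omega

end Basic

section Tiling

variable {α : Type} [DecidableEq α] {ι : Type*} {t : ι → WeightedTriple α}

/-- The function on vertices and edges that a family of weighted triples defines. It is
meaningful when distinct triples of the family have distinct edges. -/
noncomputable def tiling (t : ι → WeightedTriple α) (v : α) : Finset α → ℝ :=
  Function.extend (fun i => (t i).edge) (fun i => ((t i).weight v : ℝ) / 6) 0

lemma tiling_edge (hinj : Function.Injective fun i => (t i).edge) (v : α) (i : ι) :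
    tiling t v (t i).edge = ((t i).weight v : ℝ) / 6 :=
  hinj.extend_apply _ _ i

lemma tiling_eq_zero {e : Finset α} (he : ¬∃ i, (t i).edge = e) (v : α) : tiling t v e = 0 :=
  Function.extend_apply' _ _ e he

lemma exists_edge_of_tiling_ne_zero {v : α} {e : Finset α} (h : tiling t v e ≠ 0) :
    ∃ i, (t i).edge = e := by
  contrapose! h
  exact tiling_eq_zero (by simpa using h) v

lemma sum_tiling [Fintype α] [Fintype ι] (hinj : Function.Injective fun i => (t i).edge) (v : α) :
    ∑ e, tiling t v e = ((∑ i, (t i).weight v : ℕ) : ℝ) / 6 := by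
  rw [Nat.cast_sum, sum_div]
  exact (Fintype.sum_of_injective _ hinj _ _ (fun e he => tiling_eq_zero he v)
    fun i => (tiling_edge hinj v i).symm).symm

lemma tilingWeight_tiling [Fintype α] [Fintype ι]
    (hinj : Function.Injective fun i => (t i).edge) :
    tilingWeight (tiling t) = ((∑ i, (2 * (t i).hi + (t i).lo) : ℕ) : ℝ) / 6 := by
  simp_rw [tilingWeight, sum_tiling hinj, ← sum_weight]
  rw [← sum_div, ← Nat.cast_sum, sum_comm]

lemma third_le_tiling (hinj : Function.Injective fun i => (t i).edge)
    (hvalid : ∀ i, (t i).IsValid) {v : α} {e : Finset α} (h : tiling t v e ≠ 0) :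
    1 / 3 ≤ tiling t v e := by
  obtain ⟨i, rfl⟩ := exists_edge_of_tiling_ne_zero h
  rw [tiling_edge hinj] at h ⊢
  obtain h0 | h2 := (hvalid i).weight_eq_zero_or_two_le v
  · simp [h0] at h
  · have : (2 : ℝ) ≤ (t i).weight v := mod_cast h2
    linarith

lemma isFracHomTiling_tiling [Fintype α] [Fintype ι] {E : Finset (Finset α)}
    (hE : (E : Set (Finset α)).Sized 3) (hinj : Function.Injective fun i => (t i).edge)
    (hvalid : ∀ i, (t i).IsValid) (hmem : ∀ i, (t i).edge ∈ E)
    (hcap : ∀ v, ∑ i, (t i).weight v ≤ 6) : IsFracHomTiling (· ∈ E) (tiling t) := by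
  have nonneg (v e) : 0 ≤ tiling t v e := by
    by_cases h : tiling t v e = 0
    · exact h.ge
    · linarith [third_le_tiling hinj hvalid h]
  have sum_le_one (v) : ∑ e, tiling t v e ≤ 1 := by
    have : ((∑ i, (t i).weight v : ℕ) : ℝ) ≤ 6 := mod_cast hcap v
    rw [sum_tiling hinj]
    linarith
  refine ⟨fun v e => ⟨nonneg v e, ?_⟩, fun v e h => ?_, sum_le_one, fun e he => ?_⟩
  · exact (single_le_sum (fun e _ => nonneg v e) (mem_univ e)).trans (sum_le_one v)
  · obtain ⟨i, rfl⟩ := exists_edge_of_tiling_ne_zero h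
    refine ⟨hmem i, by_contra fun hv => h ?_⟩
    rw [tiling_edge hinj, weight_eq_zero_of_notMem hv, Nat.cast_zero, zero_div]
  · by_cases h : ∃ i, (t i).edge = e
    · obtain ⟨i, rfl⟩ := h
      have hi := hvalid i
      have hle : ((t i).lo : ℝ) ≤ (t i).hi := mod_cast hi.admissible.1
      have hratio : 2 * ((t i).hi : ℝ) ≤ 3 * (t i).lo := mod_cast hi.admissible.2.1
      refine ⟨_, _, _, rfl, hi.fst_ne_snd, hi.fst_ne_low, hi.snd_ne_low, ?_⟩
      simp only [tiling_edge hinj, hi.weight_fst, hi.weight_snd, hi.weight_low, true_and]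
      constructor <;> linarith
    · obtain ⟨x, y, z, hxy, hxz, hyz, rfl⟩ := card_eq_three.1 (hE he)
      exact ⟨x, y, z, rfl, hxy, hxz, hyz, by simp [tiling_eq_zero h]⟩

end Tiling

end WeightedTriple

open WeightedTriple

/-- The edges of `M` on the vertex set `Fin 8`. -/
def mEdge : Fin 4 → Finset (Fin 8) := ![{0, 1, 2}, {2, 3, 4}, {3, 4, 5}, {5, 6, 7}]

/-- The automorphism of `M` that interchanges the vertices within each of the pairs `{0, 1}`,
`{3, 4}`, `{6, 7}`; its fixed points are `2` and `5`. -/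
def twin : Fin 8 → Fin 8 := ![1, 0, 2, 4, 3, 5, 7, 6]

/-- The vertices of each edge of `M` in the order `(fst, snd, low)` of a weighted triple. The low
vertex is the one fixed by `twin`, so the resulting weights on the vertices are `twin`-invariant. -/
def mVertices : Fin 4 → Fin 8 × Fin 8 × Fin 8 := ![(0, 1, 2), (3, 4, 2), (3, 4, 5), (6, 7, 5)]

/-- The `k`-th edge of `M`, carrying the weights `w k = (hi, lo)`. -/
def mTriple (w : Fin 4 → ℕ × ℕ) (k : Fin 4) : WeightedTriple (Fin 8) :=
  ⟨(mVertices k).1, (mVertices k).2.1, (mVertices k).2.2, (w k).1, (w k).2⟩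

/-- The weights `w` define a fractional `hom(M)`-tiling of `M` of weight at least `n / 6` that
leaves a capacity of at least `r v / 6` unused at each vertex `v`. -/
def IsMTiling (w : Fin 4 → ℕ × ℕ) (n : ℕ) (r : Fin 8 → ℕ) : Prop :=
  (∀ k, Admissible (w k).1 (w k).2) ∧ (∀ v, ∑ k, (mTriple w k).weight v + r v ≤ 6) ∧
    n ≤ ∑ k, (2 * (w k).1 + (w k).2)

instance (w : Fin 4 → ℕ × ℕ) (n : ℕ) (r : Fin 8 → ℕ) : Decidable (IsMTiling w n r) :=
  inferInstanceAs (Decidable (_ ∧ _ ∧ _))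

lemma mEdge_injective : mEdge.Injective := by decide

lemma edge_mTriple (w : Fin 4 → ℕ × ℕ) (k : Fin 4) : (mTriple w k).edge = mEdge k := by
  suffices ∀ k, {(mVertices k).1, (mVertices k).2.1, (mVertices k).2.2} = mEdge k from this k
  decide

lemma isValid_mTriple {w : Fin 4 → ℕ × ℕ} (hw : ∀ k, Admissible (w k).1 (w k).2) (k : Fin 4) :
    (mTriple w k).IsValid := by
  have h : ∀ k, (mVertices k).1 ≠ (mVertices k).2.1 ∧ (mVertices k).1 ≠ (mVertices k).2.2 ∧
      (mVertices k).2.1 ≠ (mVertices k).2.2 := by decide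
  exact ⟨(h k).1, (h k).2.1, (h k).2.2, hw k⟩

/-- Tilings of `M` that leave `3 / 6` free at both vertices of `{0, 1}`, of `{3, 4}` and of
`{6, 7}`, respectively, and saturate all other vertices. -/
def twinTilings : List (Fin 4 → ℕ × ℕ) :=
  [![(3, 3), (3, 3), (3, 2), (6, 4)],
   ![(6, 4), (3, 2), (0, 0), (6, 6)],
   ![(6, 4), (3, 2), (3, 3), (3, 3)]]

lemma exists_isMTiling_twins {a : Fin 8} (ha : twin a ≠ a) :
    ∃ w, IsMTiling w 42 (Pi.single a 3 + Pi.single (twin a) 3) := by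
  have key : ∀ a, twin a ≠ a →
      ∃ w ∈ twinTilings, IsMTiling w 42 (Pi.single a 3 + Pi.single (twin a) 3) := by
    decide +kernel
  obtain ⟨w, -, hw⟩ := key a ha
  exact ⟨w, hw⟩

/-- Tilings of `M` of weight `40 / 6` that leave at least `2 / 6` free at `b` and at `d`
(`4 / 6` if `b = d`), for `(b, d)` running over `{0, 1} × {0, 1}`, `{0, 1} × {2}`,
`{0, 1} × {3, 4}`, `{0, 1} × {5}`, `{0, 1} × {6, 7}`, `{2} × {3, 4}`, `{3, 4} × {3, 4}`. Up to
exchanging `b` and `d` and reflecting `M`, these are all pairs not contained in `{2, 5}`. -/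
def pairTilings : List (Fin 4 → ℕ × ℕ) :=
  [![(2, 2), (6, 4), (0, 0), (6, 6)],
   ![(3, 2), (3, 2), (3, 2), (6, 4)],
   ![(4, 4), (2, 2), (2, 2), (6, 4)],
   ![(3, 2), (6, 4), (0, 0), (6, 4)],
   ![(4, 3), (3, 3), (3, 3), (4, 3)],
   ![(6, 4), (0, 0), (3, 2), (6, 4)],
   ![(6, 6), (0, 0), (2, 2), (6, 4)]]

lemma exists_isMTiling_pair {b d : Fin 8} (hbd : twin b ≠ b ∨ twin d ≠ d) :
    ∃ w, IsMTiling w 40 (Pi.single b 2 + Pi.single d 2) := by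
  -- `Fin.rev` reverses the order of the edges, which is the effect of the reflection `i ↦ 7 - i`.
  have key : ∀ b d, twin b ≠ b ∨ twin d ≠ d →
      ∃ w ∈ pairTilings ++ pairTilings.map (· ∘ Fin.rev),
        IsMTiling w 40 (Pi.single b 2 + Pi.single d 2) := by
    decide +kernel
  obtain ⟨w, -, hw⟩ := key b d hbd
  exact ⟨w, hw⟩

/-- The first cell is joined to the second by an exchange of twins in the first coordinate, and
the second coordinates are not both fixed by `twin`. Two edges `{u, a, b}` and `{u, a', b'}` with
`(a, b)` and `(a', b')` related in this way improve the tiling of the two copies of `M`. -/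
def TwinLinked (p q : Fin 8 × Fin 8) : Prop :=
  twin p.1 ≠ p.1 ∧ q.1 = twin p.1 ∧ (twin p.2 ≠ p.2 ∨ twin q.2 ≠ q.2)

instance : DecidableRel TwinLinked := fun _ _ => inferInstanceAs (Decidable (_ ∧ _ ∧ _))

/-- The `28` cells with a coordinate fixed by `twin`. -/
def cross : Finset (Fin 8 × Fin 8) := {p | twin p.1 = p.1 ∨ twin p.2 = p.2}

/-- A retraction onto the cross. The cells off the cross form nine `2 × 2` blocks indexed by pairs
of twin pairs. In a diagonal block each column is contracted to a cell in row `2`, in the six other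
blocks each row is contracted to a cell in column `2` or `5`; passing to the twin column or row
makes the contracted cells `TwinLinked` to their image. -/
def toCross (p : Fin 8 × Fin 8) : Fin 8 × Fin 8 :=
  if p ∈ cross then p
  else if p.1.val / 3 = p.2.val / 3 then (2, twin p.2)
  else (twin p.1, if (p.1.val / 3 + 1) % 3 = p.2.val / 3 then 2 else 5)

lemma card_cross : #cross = 28 := by decide

lemma toCross_mem (p : Fin 8 × Fin 8) : toCross p ∈ cross := by
  revert p
  decide +kernel

lemma twinLinked_of_toCross_eq {p q : Fin 8 × Fin 8} (hpq : p ≠ q) (h : toCross p = toCross q) :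
    TwinLinked p q ∨ TwinLinked p.swap q.swap := by
  revert p q
  decide +kernel

lemma exists_twinLinked {S : Finset (Fin 8 × Fin 8)} (hS : 29 ≤ #S) :
    ∃ p ∈ S, ∃ q ∈ S, TwinLinked p q ∨ TwinLinked p.swap q.swap := by
  have hlt : #cross < #S := by rw [card_cross]; omega
  obtain ⟨p, hp, q, hq, hpq, h⟩ :=
    exists_ne_map_eq_of_card_lt_of_maps_to hlt fun p _ => toCross_mem p
  exact ⟨p, hp, q, hq, twinLinked_of_toCross_eq hpq h⟩

section TwoCopies

variable {α : Type} [DecidableEq α] {E : Finset (Finset α)} {c₁ c₂ : Fin 8 → α} {u : α}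

/-- The 3-uniform hypergraph `E` contains vertex-disjoint copies of `M` embedded by `c₁` and `c₂`,
and the vertex `u` lies outside both of them. -/
structure HasTwoCopies (E : Finset (Finset α)) (c₁ c₂ : Fin 8 → α) (u : α) : Prop where
  sized : (E : Set (Finset α)).Sized 3
  injective_left : c₁.Injective
  injective_right : c₂.Injective
  disjoint : ∀ i j, c₁ i ≠ c₂ j
  ne_left : ∀ i, c₁ i ≠ u
  ne_right : ∀ i, c₂ i ≠ u
  mem_left : ∀ k, (mEdge k).image c₁ ∈ E
  mem_right : ∀ k, (mEdge k).image c₂ ∈ E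

/-- The pairs that form an edge with `u`, one vertex in each of the two copies of `M`. -/
def link (E : Finset (Finset α)) (c₁ c₂ : Fin 8 → α) (u : α) : Finset (Fin 8 × Fin 8) :=
  {p | {u, c₁ p.1, c₂ p.2} ∈ E}

lemma mem_link {p : Fin 8 × Fin 8} : p ∈ link E c₁ c₂ u ↔ {u, c₁ p.1, c₂ p.2} ∈ E := by
  simp [link]

lemma swap_mem_link {p : Fin 8 × Fin 8} : p.swap ∈ link E c₂ c₁ u ↔ p ∈ link E c₁ c₂ u := by
  simp only [mem_link, Prod.fst_swap, Prod.snd_swap, pair_comm]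

/-- The triple `{u, c₁ p.1, c₂ p.2}` with weight `3 / 6` on `u` and `c₁ p.1` and `2 / 6` on
`c₂ p.2`. -/
def linkTriple (c₁ c₂ : Fin 8 → α) (u : α) (p : Fin 8 × Fin 8) : WeightedTriple α :=
  ⟨u, c₁ p.1, c₂ p.2, 3, 2⟩

/-- The ten weighted triples of the improved tiling: `w₁` on the first copy of `M`, `w₂` on the
second one, and two edges through `u`. -/
def improvedFamily (c₁ c₂ : Fin 8 → α) (u : α) (w₁ w₂ : Fin 4 → ℕ × ℕ) (p q : Fin 8 × Fin 8) :
    (Fin 4 ⊕ Fin 4) ⊕ Fin 2 → WeightedTriple α :=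
  Sum.elim (Sum.elim (fun k => (mTriple w₁ k).map c₁) fun k => (mTriple w₂ k).map c₂)
    ![linkTriple c₁ c₂ u p, linkTriple c₁ c₂ u q]

lemma weight_linkTriple_le {v : α} (h₁ : ∀ i, c₁ i ≠ v) (h₂ : ∀ i, c₂ i ≠ v) (u : α)
    (p : Fin 8 × Fin 8) : (linkTriple c₁ c₂ u p).weight v ≤ 3 := by
  simp only [weight_apply, linkTriple, (h₁ _).symm, (h₂ _).symm, if_false, add_zero]
  split_ifs <;> simp

lemma edge_improvedFamily (w₁ w₂ : Fin 4 → ℕ × ℕ) (p q : Fin 8 × Fin 8) :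
    (fun i => (improvedFamily c₁ c₂ u w₁ w₂ p q i).edge) =
      Sum.elim (Sum.elim (fun k => (mEdge k).image c₁) fun k => (mEdge k).image c₂)
        ![(linkTriple c₁ c₂ u p).edge, (linkTriple c₁ c₂ u q).edge] := by
  ext1 i
  rcases i with (k | k) | k
  · simp [improvedFamily, edge_map, edge_mTriple]
  · simp [improvedFamily, edge_map, edge_mTriple]
  · fin_cases k <;> rfl

namespace HasTwoCopies

lemma symm (hE : HasTwoCopies E c₁ c₂ u) : HasTwoCopies E c₂ c₁ u where
  sized := hE.sized
  injective_left := hE.injective_right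
  injective_right := hE.injective_left
  disjoint i j := (hE.disjoint j i).symm
  ne_left := hE.ne_right
  ne_right := hE.ne_left
  mem_left := hE.mem_right
  mem_right := hE.mem_left

variable {w₁ w₂ : Fin 4 → ℕ × ℕ} {p q : Fin 8 × Fin 8}

lemma isValid_linkTriple (hE : HasTwoCopies E c₁ c₂ u) : (linkTriple c₁ c₂ u p).IsValid :=
  ⟨(hE.ne_left _).symm, (hE.ne_right _).symm, hE.disjoint _ _,
    show Admissible 3 2 by decide⟩

lemma isValid_improvedFamily (hE : HasTwoCopies E c₁ c₂ u)
    (hw₁ : ∀ k, Admissible (w₁ k).1 (w₁ k).2) (hw₂ : ∀ k, Admissible (w₂ k).1 (w₂ k).2) (i) :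
    (improvedFamily c₁ c₂ u w₁ w₂ p q i).IsValid := by
  rcases i with (k | k) | k
  · exact (isValid_mTriple hw₁ k).map hE.injective_left
  · exact (isValid_mTriple hw₂ k).map hE.injective_right
  · fin_cases k <;> exact hE.isValid_linkTriple

lemma edge_improvedFamily_mem (hE : HasTwoCopies E c₁ c₂ u) (hp : p ∈ link E c₁ c₂ u)
    (hq : q ∈ link E c₁ c₂ u) (i) : (improvedFamily c₁ c₂ u w₁ w₂ p q i).edge ∈ E := by
  rcases i with (k | k) | k
  · simpa [improvedFamily, edge_map, edge_mTriple] using hE.mem_left k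
  · simpa [improvedFamily, edge_map, edge_mTriple] using hE.mem_right k
  · fin_cases k
    · exact mem_link.1 hp
    · exact mem_link.1 hq

lemma image_left_ne_image_right (hE : HasTwoCopies E c₁ c₂ u) (k l : Fin 4) :
    (mEdge k).image c₁ ≠ (mEdge l).image c₂ := by
  intro h
  have hne : ∀ k, (mEdge k).Nonempty := by decide
  obtain ⟨i, hi⟩ := hne k
  obtain ⟨j, -, hj⟩ := mem_image.1 (h ▸ mem_image_of_mem c₁ hi)
  exact hE.disjoint i j hj.symm

lemma edge_linkTriple_injective (hE : HasTwoCopies E c₁ c₂ u) :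
    Function.Injective fun p => (linkTriple c₁ c₂ u p).edge := by
  intro p q (h : (linkTriple c₁ c₂ u p).edge = (linkTriple c₁ c₂ u q).edge)
  have h₁ : c₁ p.1 ∈ (linkTriple c₁ c₂ u q).edge := h ▸ by simp [edge, linkTriple]
  have h₂ : c₂ p.2 ∈ (linkTriple c₁ c₂ u q).edge := h ▸ by simp [edge, linkTriple]
  simp only [edge, linkTriple, mem_insert, mem_singleton, hE.ne_left, hE.ne_right, hE.disjoint,
    (hE.disjoint _ _).symm, hE.injective_left.eq_iff, hE.injective_right.eq_iff, or_false,
    false_or] at h₁ h₂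
  exact Prod.ext h₁ h₂

lemma edge_improvedFamily_injective (hE : HasTwoCopies E c₁ c₂ u) (hpq : p ≠ q) :
    Function.Injective fun i => (improvedFamily c₁ c₂ u w₁ w₂ p q i).edge := by
  have hcopy {c : Fin 8 → α} (hc : c.Injective) : Function.Injective fun k => (mEdge k).image c :=
    (image_injective hc).comp mEdge_injective
  have hlink : Function.Injective
      ![(linkTriple c₁ c₂ u p).edge, (linkTriple c₁ c₂ u q).edge] := by
    simpa [Function.Injective, Fin.forall_fin_two] using
      ⟨hE.edge_linkTriple_injective.ne hpq, (hE.edge_linkTriple_injective.ne hpq).symm⟩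
  have hu (k) : u ∈ ![(linkTriple c₁ c₂ u p).edge, (linkTriple c₁ c₂ u q).edge] k := by
    fin_cases k <;> simp [edge, linkTriple]
  rw [edge_improvedFamily]
  refine ((hcopy hE.injective_left).sumElim (hcopy hE.injective_right)
    hE.image_left_ne_image_right).sumElim hlink fun i k h => ?_
  have hui := h ▸ hu k
  cases i <;> simp [hE.ne_left, hE.ne_right] at hui

lemma weight_linkTriple_left (hE : HasTwoCopies E c₁ c₂ u) (p : Fin 8 × Fin 8) (i : Fin 8) :
    (linkTriple c₁ c₂ u p).weight (c₁ i) = (Pi.single p.1 3 : Fin 8 → ℕ) i := by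
  simp [weight_apply, linkTriple, hE.ne_left, hE.disjoint, hE.injective_left.eq_iff,
    Pi.single_apply]

lemma weight_linkTriple_right (hE : HasTwoCopies E c₁ c₂ u) (p : Fin 8 × Fin 8) (i : Fin 8) :
    (linkTriple c₁ c₂ u p).weight (c₂ i) = (Pi.single p.2 2 : Fin 8 → ℕ) i := by
  simp [weight_apply, linkTriple, hE.ne_right, (hE.disjoint _ _).symm, hE.injective_right.eq_iff,
    Pi.single_apply]

lemma sum_weight_improvedFamily_le (hE : HasTwoCopies E c₁ c₂ u)
    (hw₁ : ∀ v, ∑ k, (mTriple w₁ k).weight v +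
      (Pi.single p.1 3 + Pi.single q.1 3 : Fin 8 → ℕ) v ≤ 6)
    (hw₂ : ∀ v, ∑ k, (mTriple w₂ k).weight v +
      (Pi.single p.2 2 + Pi.single q.2 2 : Fin 8 → ℕ) v ≤ 6) (v : α) :
    ∑ i, (improvedFamily c₁ c₂ u w₁ w₂ p q i).weight v ≤ 6 := by
  simp only [improvedFamily, Fintype.sum_sum_type, Sum.elim_inl, Sum.elim_inr, Fin.sum_univ_two,
    Matrix.cons_val_zero, Matrix.cons_val_one]
  by_cases h₁ : ∃ i, c₁ i = v
  · obtain ⟨i, rfl⟩ := h₁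
    simpa [weight_map_apply hE.injective_left, weight_map_eq_zero fun j => (hE.disjoint i j).symm,
      hE.weight_linkTriple_left] using hw₁ i
  by_cases h₂ : ∃ i, c₂ i = v
  · obtain ⟨i, rfl⟩ := h₂
    simpa [weight_map_apply hE.injective_right, weight_map_eq_zero fun j => hE.disjoint j i,
      hE.weight_linkTriple_right] using hw₂ i
  · push Not at h₁ h₂
    have hp := weight_linkTriple_le h₁ h₂ u p
    have hq := weight_linkTriple_le h₁ h₂ u q
    simp only [weight_map_eq_zero h₁, weight_map_eq_zero h₂, sum_const_zero]
    omega

lemma exists_tiling_of_twinLinked [Fintype α] (hE : HasTwoCopies E c₁ c₂ u)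
    (hp : p ∈ link E c₁ c₂ u) (hq : q ∈ link E c₁ c₂ u) (hpq : TwinLinked p q) :
    ∃ h : α → Finset α → ℝ, IsFracHomTiling (· ∈ E) h ∧
      (∀ v e, h v e ≠ 0 → 1 / 3 ≤ h v e) ∧ 16 + 1 / 3 ≤ tilingWeight h := by
  obtain ⟨htwin, hq₁, hfix⟩ := hpq
  obtain ⟨w₁, hadm₁, hcap₁, htot₁⟩ := exists_isMTiling_twins htwin
  obtain ⟨w₂, hadm₂, hcap₂, htot₂⟩ := exists_isMTiling_pair hfix
  rw [← hq₁] at hcap₁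
  have hne : p ≠ q := by
    rintro rfl
    exact htwin hq₁.symm
  have hinj := hE.edge_improvedFamily_injective (w₁ := w₁) (w₂ := w₂) hne
  have hvalid := hE.isValid_improvedFamily (p := p) (q := q) hadm₁ hadm₂
  have htotal : 98 ≤ ∑ i, (2 * (improvedFamily c₁ c₂ u w₁ w₂ p q i).hi +
      (improvedFamily c₁ c₂ u w₁ w₂ p q i).lo) := by
    simp only [improvedFamily, Fintype.sum_sum_type, Sum.elim_inl, Sum.elim_inr, Fin.sum_univ_two]
    exact add_le_add (add_le_add htot₁ htot₂) (le_refl 16)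
  refine ⟨tiling (improvedFamily c₁ c₂ u w₁ w₂ p q),
    isFracHomTiling_tiling hE.sized hinj hvalid (hE.edge_improvedFamily_mem hp hq)
      (hE.sum_weight_improvedFamily_le hcap₁ hcap₂),
    fun v e => third_le_tiling hinj hvalid, ?_⟩
  have : (98 : ℝ) ≤ (∑ i, (2 * (improvedFamily c₁ c₂ u w₁ w₂ p q i).hi +
      (improvedFamily c₁ c₂ u w₁ w₂ p q i).lo) : ℕ) := mod_cast htotal
  rw [tilingWeight_tiling hinj]
  linarith

end HasTwoCopies

theorem frac_homM_tiling_of_L29_general [Fintype α] (hE : HasTwoCopies E c₁ c₂ u)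
    (hdeg : 29 ≤ #(link E c₁ c₂ u)) :
    ∃ h : α → Finset α → ℝ,
      IsFracHomTiling (· ∈ E) h ∧
      (∀ v e, h v e ≠ 0 → 1 / 3 ≤ h v e) ∧
      16 + 1 / 3 ≤ tilingWeight h := by
  obtain ⟨p, hp, q, hq, hpq | hpq⟩ := exists_twinLinked hdeg
  · exact hE.exists_tiling_of_twinLinked hp hq hpq
  · exact hE.symm.exists_tiling_of_twinLinked (swap_mem_link.2 hp) (swap_mem_link.2 hq) hpq

end TwoCopies

lemma mem_MEdgesOf {c : Fin 8 → L29V} {e : Finset L29V} :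
    e ∈ MEdgesOf c ↔ ∃ k, (mEdge k).image c = e := by
  simp [MEdgesOf, mEdge, Fin.exists_fin_succ, image_insert, eq_comm]

lemma m1_injective : m1.Injective := Sum.inl_injective.comp Sum.inl_injective

lemma m2_injective : m2.Injective := Sum.inl_injective.comp Sum.inr_injective

namespace IsL29

variable {E : Finset (Finset L29V)}

lemma sized (hE : IsL29 E) : (E : Set (Finset L29V)).Sized 3 := by
  have card_mEdge : ∀ k, #(mEdge k) = 3 := by decide
  intro e he
  obtain h | h | ⟨w, a, b, rfl⟩ := hE.2.2.1 e he
  · obtain ⟨k, rfl⟩ := mem_MEdgesOf.1 h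
    rw [card_image_of_injective _ m1_injective, card_mEdge]
  · obtain ⟨k, rfl⟩ := mem_MEdgesOf.1 h
    rw [card_image_of_injective _ m2_injective, card_mEdge]
  · exact card_eq_three.2 ⟨_, _, _, by simp [uv, m1], by simp [uv, m2], by simp [m1, m2], rfl⟩

lemma hasTwoCopies (hE : IsL29 E) : HasTwoCopies E m1 m2 (uv 0) where
  sized := hE.sized
  injective_left := m1_injective
  injective_right := m2_injective
  disjoint := by simp [m1, m2]
  ne_left := by simp [m1, uv]
  ne_right := by simp [m2, uv]
  mem_left k := hE.1 _ (mem_MEdgesOf.2 ⟨k, rfl⟩)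
  mem_right k := hE.2.1 _ (mem_MEdgesOf.2 ⟨k, rfl⟩)

lemma exists_mem_link (hE : IsL29 E) {e : Finset L29V} (he : e ∈ E) (hu : uv 0 ∈ e) :
    ∃ p ∈ link E m1 m2 (uv 0), {uv 0, m1 p.1, m2 p.2} = e := by
  obtain h | h | ⟨w, a, b, rfl⟩ := hE.2.2.1 e he
  · obtain ⟨k, rfl⟩ := mem_MEdgesOf.1 h
    simp [m1, uv] at hu
  · obtain ⟨k, rfl⟩ := mem_MEdgesOf.1 h
    simp [m2, uv] at hu
  · obtain rfl : 0 = w := by simpa [uv, m1, m2] using hu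
    exact ⟨(a, b), mem_link.2 he, rfl⟩

lemma le_card_link (hE : IsL29 E) : 29 ≤ #(link E m1 m2 (uv 0)) := by
  refine hE.2.2.2.2.2.trans (card_le_card_of_surjOn (fun p => {uv 0, m1 p.1, m2 p.2}) ?_)
  intro e he
  obtain ⟨heE, hu⟩ := mem_filter.1 he
  exact hE.exists_mem_link heE hu

end IsL29

theorem frac_homM_tiling_of_L29 (E : Finset (Finset L29V)) (hE : IsL29 E) :
    ∃ h : L29V → Finset L29V → ℝ,
      IsFracHomTiling (· ∈ E) h ∧
      (∀ v e, h v e ≠ 0 → 1 / 3 ≤ h v e) ∧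
      16 + 1 / 3 ≤ tilingWeight h :=
  frac_homM_tiling_of_L29_general hE.hasTwoCopies hE.le_card_link
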